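/- (Lemma: value differences of the smoothed game are uniformly close to those of the original game.) In a finite Markov game with smoothing parameter τ > 0, for every player i, all policies π_i, π_i' of player i, every π_{-i}, and every probability distribution μ on S: |( V_i(μ,(π_i,π_{-i})) − V_i(μ,(π_i',π_{-i})) ) − ( Ṽ_i(μ,(π_i,π_{-i})) − Ṽ_i(μ,(π_i',π_{-i})) )| ≤ 2·τ·log|A_i| / (1−δ). -/

import Mathlib

open Finset

section MarkovGameDefs

variable {S : Type*} {I : Type*} {A : I → Type*}

/-- A probability vector on a finite set. -/
def IsProbVec {α : Type*} [Fintype α] (p : α → ℝ) : Prop :=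
  (∀ a, 0 ≤ p a) ∧ ∑ a, p a = 1

/-- A stationary policy profile: each player's policy gives a probability vector at each state. -/
def IsPolicy [Fintype I] [∀ i, Fintype (A i)] (π : ∀ i, S → A i → ℝ) : Prop :=
  ∀ i s, IsProbVec (π i s)

/-- A transition kernel. -/
def IsKernel [Fintype S] (P : S → (∀ i, A i) → S → ℝ) : Prop :=
  ∀ s a, IsProbVec (fun s' => P s a s')

/-- Product distribution on joint actions induced by a profile. -/
noncomputable def jointDist [Fintype I] (π : ∀ i, S → A i → ℝ) (s : S) (a : ∀ i, A i) : ℝ :=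
  ∏ i, π i s (a i)

/-- Induced transition matrix `P^π`. -/
noncomputable def transMat [Fintype S] [Fintype I] [DecidableEq I] [∀ i, Fintype (A i)]
    (P : S → (∀ i, A i) → S → ℝ) (π : ∀ i, S → A i → ℝ) (s s' : S) : ℝ :=
  ∑ a : ∀ j, A j, jointDist π s a * P s a s'

/-- Expected one-stage payoff `u(s,π)`. -/
noncomputable def expPay [Fintype I] [DecidableEq I] [∀ i, Fintype (A i)]
    (u : S → (∀ i, A i) → ℝ) (π : ∀ i, S → A i → ℝ) (s : S) : ℝ :=
  ∑ a : ∀ j, A j, jointDist π s a * u s a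

/-- `V` solves the Bellman equation for payoff `u`, kernel `P`, discount `δ`, profile `π`. -/
def IsValueFun [Fintype S] [Fintype I] [DecidableEq I] [∀ i, Fintype (A i)]
    (δ : ℝ) (P : S → (∀ i, A i) → S → ℝ) (u : S → (∀ i, A i) → ℝ)
    (π : ∀ i, S → A i → ℝ) (V : S → ℝ) : Prop :=
  ∀ s, V s = expPay u π s + δ * ∑ s', transMat P π s s' * V s'

/-- Player `i`'s Q-function, given a value function `V` for player `i` under `π`. -/
noncomputable def Qfun [Fintype S] [Fintype I] [DecidableEq I] [∀ i, Fintype (A i)]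
    [∀ i, DecidableEq (A i)]
    (δ : ℝ) (P : S → (∀ i, A i) → S → ℝ) (u : S → (∀ i, A i) → ℝ)
    (π : ∀ i, S → A i → ℝ) (V : S → ℝ) (i : I) (s : S) (ai : A i) : ℝ :=
  ∑ a : ∀ j, A j,
    if a i = ai then
      (∏ j ∈ Finset.univ.erase i, π j s (a j)) * (u s a + δ * ∑ s', P s a s' * V s')
    else 0

/-- Discounted state visitation distribution `d_μ^π`. -/
noncomputable def dvisit [Fintype S] [DecidableEq S] [Fintype I] [DecidableEq I]
    [∀ i, Fintype (A i)]
    (δ : ℝ) (P : S → (∀ i, A i) → S → ℝ) (π : ∀ i, S → A i → ℝ) (μ : S → ℝ) (s : S) : ℝ :=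
  (1 - δ) * ∑' k : ℕ, δ ^ k * ∑ s0, μ s0 * ((Matrix.of (transMat P π)) ^ k) s0 s

/-- Negative entropy `ν(p) = ∑ p log p` (with the convention `0 log 0 = 0`,
which holds automatically since `Real.log 0 = 0`). -/
noncomputable def negent {α : Type*} [Fintype α] (p : α → ℝ) : ℝ :=
  ∑ a, p a * Real.log (p a)

/-- `Ṽ` solves the Bellman equation of the `τ`-smoothed game for player `i`. -/
def IsSmoothedValueFun [Fintype S] [Fintype I] [DecidableEq I] [∀ i, Fintype (A i)]
    (δ τ : ℝ) (P : S → (∀ i, A i) → S → ℝ) (u : S → (∀ i, A i) → ℝ)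
    (π : ∀ i, S → A i → ℝ) (i : I) (Vt : S → ℝ) : Prop :=
  ∀ s, Vt s = expPay u π s - τ * negent (π i s) + δ * ∑ s', transMat P π s s' * Vt s'

/-- Smoothed Q-function `Q̃_i(s,a_i;π)`. -/
noncomputable def Qsmooth [Fintype S] [Fintype I] [DecidableEq I] [∀ i, Fintype (A i)]
    [∀ i, DecidableEq (A i)]
    (δ τ : ℝ) (P : S → (∀ i, A i) → S → ℝ) (u : S → (∀ i, A i) → ℝ)
    (π : ∀ i, S → A i → ℝ) (Vt : S → ℝ) (i : I) (s : S) (ai : A i) : ℝ :=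
  ∑ a : ∀ j, A j,
    if a i = ai then
      (∏ j ∈ Finset.univ.erase i, π j s (a j)) *
        (u s a - τ * negent (π i s) + δ * ∑ s', P s a s' * Vt s')
    else 0

/-- Euclidean (ℓ²) norm on `α → ℝ`. -/
noncomputable def l2norm {α : Type*} [Fintype α] (f : α → ℝ) : ℝ :=
  Real.sqrt (∑ a, f a ^ 2)

/-- Standard inner product on `α → ℝ`. -/
noncomputable def dotp {α : Type*} [Fintype α] (f g : α → ℝ) : ℝ :=
  ∑ a, f a * g a

/-- `y` is the Euclidean orthogonal projection of `x` onto the probability simplex. -/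
noncomputable def IsProjSimplex {α : Type*} [Fintype α] (x y : α → ℝ) : Prop :=
  IsProbVec y ∧ ∀ z, IsProbVec z → l2norm (fun a => y a - x a) ≤ l2norm (fun a => z a - x a)

/-- Softmax (smoothed best response) with temperature `τ`. -/
noncomputable def softmax {α : Type*} [Fintype α] (τ : ℝ) (q : α → ℝ) (a : α) : ℝ :=
  Real.exp (q a / τ) / ∑ a', Real.exp (q a' / τ)

end MarkovGameDefs

/-!
For a fixed policy profile, `Ṽ_i` and `V_i` solve Bellman equations with the same transition matrix,
so by linearity `Ṽ_i - V_i` is the discounted value of the entropy bonus `-τ ν_i`. The bonus lies in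
`[0, τ log |A_i|]`, hence `Ṽ_i - V_i` lies in `[0, τ log |A_i| / (1 - δ)]`. For any two profiles the
gaps being compared are points of this one interval, so they differ by at most its length; this
saves the factor `2`.
-/

section ProbVec

variable {α β : Type*} [Fintype α] [Fintype β] {p : α → ℝ}

lemma IsProbVec.nonempty (hp : IsProbVec p) : Nonempty α := by
  by_contra h
  rw [not_nonempty_iff] at h
  simpa using hp.2

lemma IsProbVec.le_one (hp : IsProbVec p) (a : α) : p a ≤ 1 :=
  hp.2 ▸ single_le_sum (fun b _ => hp.1 b) (mem_univ a)

lemma IsProbVec.sum_smul_mem {E : Type*} [AddCommGroup E] [Module ℝ E] (hp : IsProbVec p)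
    {C : Set E} (hC : Convex ℝ C) {f : α → E} (hf : ∀ a, f a ∈ C) : ∑ a, p a • f a ∈ C :=
  hC.sum_mem (fun a _ => hp.1 a) hp.2 fun a _ => hf a

lemma IsProbVec.mixture (hp : IsProbVec p) {q : α → β → ℝ} (hq : ∀ a, IsProbVec (q a)) :
    IsProbVec fun b => ∑ a, p a * q a b := by
  have hmem : ∑ a, p a • q a ∈ stdSimplex ℝ β := hp.sum_smul_mem (convex_stdSimplex ℝ β) hq
  have heq : (fun b => ∑ a, p a * q a b) = ∑ a, p a • q a := by
    ext b
    simp only [Finset.sum_apply, Pi.smul_apply, smul_eq_mul]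
  exact heq ▸ hmem

lemma IsProbVec.pi {ι : Type*} [Fintype ι] [DecidableEq ι] {κ : ι → Type*} [∀ i, Fintype (κ i)]
    {q : ∀ i, κ i → ℝ} (hq : ∀ i, IsProbVec (q i)) :
    IsProbVec fun x : ∀ i, κ i => ∏ i, q i (x i) := by
  refine ⟨fun x => prod_nonneg fun i _ => (hq i).1 (x i), ?_⟩
  rw [← Fintype.prod_sum]
  exact prod_eq_one fun i _ => (hq i).2

end ProbVec

section Entropy

variable {α : Type*} [Fintype α] {p : α → ℝ}

lemma neg_negent_eq_sum_negMulLog (p : α → ℝ) : -negent p = ∑ a, Real.negMulLog (p a) := by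
  simp only [negent, Real.negMulLog, neg_mul, sum_neg_distrib]

lemma IsProbVec.neg_negent_nonneg (hp : IsProbVec p) : 0 ≤ -negent p := by
  rw [neg_negent_eq_sum_negMulLog]
  exact sum_nonneg fun a _ => Real.negMulLog_nonneg (hp.1 a) (hp.le_one a)

-- Jensen's inequality for the concave function `x ↦ -x log x` with uniform weights.
lemma IsProbVec.neg_negent_le_log_card (hp : IsProbVec p) :
    -negent p ≤ Real.log (Fintype.card α) := by
  have := hp.nonempty
  set n : ℝ := (Fintype.card α : ℝ) with hn
  have hn_pos : 0 < n := by rw [hn]; exact_mod_cast Fintype.card_pos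
  have uniform_sum : ∑ _a : α, n⁻¹ = 1 := by
    rw [sum_const, card_univ, nsmul_eq_mul, ← hn, mul_inv_cancel₀ hn_pos.ne']
  have jensen : n⁻¹ * ∑ a, Real.negMulLog (p a) ≤ n⁻¹ * Real.log n :=
    calc n⁻¹ * ∑ a, Real.negMulLog (p a)
        = ∑ a, n⁻¹ • Real.negMulLog (p a) := by simp only [smul_eq_mul, mul_sum]
      _ ≤ Real.negMulLog (∑ a, n⁻¹ • p a) :=
          Real.concaveOn_negMulLog.le_map_sum (fun _ _ => (inv_pos.2 hn_pos).le) uniform_sum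
            fun a _ => hp.1 a
      _ = Real.negMulLog n⁻¹ := by rw [← smul_sum, hp.2, smul_eq_mul, mul_one]
      _ = n⁻¹ * Real.log n := by rw [Real.negMulLog, Real.log_inv, neg_mul_neg]
  rw [neg_negent_eq_sum_negMulLog]
  exact le_of_mul_le_mul_left jensen (inv_pos.2 hn_pos)

end Entropy

section Bellman

variable {S : Type*} [Fintype S] {δ b c : ℝ} {T : S → S → ℝ} {r r' V V' : S → ℝ}

/-- The Bellman equation `V = r + δ T V` of a Markov chain with rewards: for a stochastic matrix `T`
and `0 ≤ δ < 1` its solution is the expected total `δ`-discounted reward. `IsValueFun` and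
`IsSmoothedValueFun` unfold to it, with different rewards `r`. -/
def SolvesBellman (δ : ℝ) (T : S → S → ℝ) (r V : S → ℝ) : Prop :=
  ∀ s, V s = r s + δ * ∑ s', T s s' * V s'

namespace SolvesBellman

lemma sub (hV : SolvesBellman δ T r V) (hV' : SolvesBellman δ T r' V') :
    SolvesBellman δ T (r - r') (V - V') := by
  intro s
  simp only [Pi.sub_apply, mul_sub, sum_sub_distrib]
  linear_combination hV s - hV' s

lemma neg (hV : SolvesBellman δ T r V) : SolvesBellman δ T (-r) (-V) := by
  intro s
  simp only [Pi.neg_apply, mul_neg, sum_neg_distrib]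
  linear_combination -hV s

-- Evaluate the equation at a maximiser of `V`, whose value dominates the average over successors.
lemma le_div_one_sub (hV : SolvesBellman δ T r V) (hT : ∀ s, IsProbVec (T s)) (hδ : 0 ≤ δ)
    (hδ1 : δ < 1) (hr : ∀ s, r s ≤ c) (s : S) : V s ≤ c / (1 - δ) := by
  have : Nonempty S := ⟨s⟩
  obtain ⟨m, hm⟩ := Finite.exists_max V
  have average_le : ∑ s', T m s' * V s' ≤ V m := (hT m).sum_smul_mem (convex_Iic (V m)) hm
  have max_le : V m ≤ c + δ * V m :=
    calc V m = r m + δ * ∑ s', T m s' * V s' := hV m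
      _ ≤ c + δ * V m := by gcongr; exact hr m
  refine (hm s).trans ((le_div_iff₀ (sub_pos.2 hδ1)).2 ?_)
  linarith

lemma div_one_sub_le (hV : SolvesBellman δ T r V) (hT : ∀ s, IsProbVec (T s)) (hδ : 0 ≤ δ)
    (hδ1 : δ < 1) (hr : ∀ s, b ≤ r s) (s : S) : b / (1 - δ) ≤ V s := by
  have h : -V s ≤ -b / (1 - δ) :=
    hV.neg.le_div_one_sub hT hδ hδ1 (fun t => neg_le_neg (hr t)) s
  rwa [neg_div, neg_le_neg_iff] at h

end SolvesBellman

end Bellman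

section MarkovGame

variable {S I : Type*} [Fintype I] [DecidableEq I] {A : I → Type*} [∀ i, Fintype (A i)]
  {π π' : ∀ j, S → A j → ℝ}

lemma IsPolicy.update (hπ : IsPolicy π) {i : I} {πi : S → A i → ℝ}
    (hπi : ∀ s, IsProbVec (πi s)) : IsPolicy (Function.update π i πi) :=
  (Function.forall_update_iff π fun _ ρ => ∀ s, IsProbVec (ρ s)).2 ⟨hπi, fun j _ => hπ j⟩

variable [Fintype S] {δ τ : ℝ} {P : S → (∀ j, A j) → S → ℝ} {u : S → (∀ j, A j) → ℝ} {i : I}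
  {V V' Vt Vt' μ : S → ℝ}

lemma IsKernel.isProbVec_transMat (hP : IsKernel P) (hπ : IsPolicy π) (s : S) :
    IsProbVec (transMat P π s) :=
  (IsProbVec.pi fun j => hπ j s).mixture (hP s)

lemma solvesBellman_smoothed_sub (hV : IsValueFun δ P u π V)
    (hVt : IsSmoothedValueFun δ τ P u π i Vt) :
    SolvesBellman δ (transMat P π) (fun s => τ * -negent (π i s)) (Vt - V) := by
  have hsub : SolvesBellman δ (transMat P π)
      ((fun s => expPay u π s - τ * negent (π i s)) - expPay u π) (Vt - V) :=
    SolvesBellman.sub hVt hV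
  convert hsub using 1
  ext s
  simp only [Pi.sub_apply]
  ring

lemma smoothed_sub_mem_Icc (hδ : 0 ≤ δ) (hδ1 : δ < 1) (hP : IsKernel P) (hτ : 0 ≤ τ)
    (hπ : IsPolicy π) (hV : IsValueFun δ P u π V) (hVt : IsSmoothedValueFun δ τ P u π i Vt)
    (s : S) : Vt s - V s ∈ Set.Icc 0 (τ * Real.log (Fintype.card (A i)) / (1 - δ)) := by
  have hD := solvesBellman_smoothed_sub hV hVt
  have hT := hP.isProbVec_transMat hπ
  have bonus_nonneg (t : S) : 0 ≤ τ * -negent (π i t) := mul_nonneg hτ (hπ i t).neg_negent_nonneg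
  have bonus_le (t : S) : τ * -negent (π i t) ≤ τ * Real.log (Fintype.card (A i)) :=
    mul_le_mul_of_nonneg_left (hπ i t).neg_negent_le_log_card hτ
  exact ⟨zero_div (1 - δ) ▸ hD.div_one_sub_le hT hδ hδ1 bonus_nonneg s,
    hD.le_div_one_sub hT hδ hδ1 bonus_le s⟩

lemma sum_smoothed_sub_mem_Icc (hδ : 0 ≤ δ) (hδ1 : δ < 1) (hP : IsKernel P) (hτ : 0 ≤ τ)
    (hπ : IsPolicy π) (hV : IsValueFun δ P u π V) (hVt : IsSmoothedValueFun δ τ P u π i Vt)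
    (hμ : IsProbVec μ) :
    ∑ s, μ s * Vt s - ∑ s, μ s * V s ∈
      Set.Icc 0 (τ * Real.log (Fintype.card (A i)) / (1 - δ)) := by
  simp only [← sum_sub_distrib, ← mul_sub]
  exact hμ.sum_smul_mem (convex_Icc _ _) (smoothed_sub_mem_Icc hδ hδ1 hP hτ hπ hV hVt)

theorem smoothed_value_difference_close_general (hδ : 0 ≤ δ) (hδ1 : δ < 1) (hP : IsKernel P)
    (hτ : 0 ≤ τ) (hπ : IsPolicy π) (hπ' : IsPolicy π')
    (hV : IsValueFun δ P u π V) (hV' : IsValueFun δ P u π' V')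
    (hVt : IsSmoothedValueFun δ τ P u π i Vt) (hVt' : IsSmoothedValueFun δ τ P u π' i Vt')
    (hμ : IsProbVec μ) :
    |((∑ s, μ s * V s) - (∑ s, μ s * V' s)) - ((∑ s, μ s * Vt s) - (∑ s, μ s * Vt' s))| ≤
      τ * Real.log (Fintype.card (A i)) / (1 - δ) := by
  obtain ⟨gap_nonneg, gap_le⟩ := sum_smoothed_sub_mem_Icc hδ hδ1 hP hτ hπ hV hVt hμ
  obtain ⟨gap_nonneg', gap_le'⟩ := sum_smoothed_sub_mem_Icc hδ hδ1 hP hτ hπ' hV' hVt' hμ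
  rw [abs_le]
  constructor <;> linarith

end MarkovGame

/-- **Lemma:** value differences of the smoothed game are uniformly close to those of the
original game. -/
theorem smoothed_value_difference_close
    {S I : Type*} [Fintype S] [Nonempty S] [DecidableEq S]
    [Fintype I] [Nonempty I] [DecidableEq I]
    {A : I → Type*} [∀ i, Fintype (A i)] [∀ i, Nonempty (A i)] [∀ i, DecidableEq (A i)]
    (δ : ℝ) (hδ : 0 < δ) (hδ1 : δ < 1)
    (P : S → (∀ i, A i) → S → ℝ) (hP : IsKernel P)
    (u : I → S → (∀ i, A i) → ℝ)
    (τ : ℝ) (hτ : 0 < τ)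
    (V Vt : I → (∀ j, S → A j → ℝ) → S → ℝ)
    (hV : ∀ i π, IsPolicy π → IsValueFun δ P (u i) π (V i π))
    (hVt : ∀ i π, IsPolicy π → IsSmoothedValueFun δ τ P (u i) π i (Vt i π)) :
    ∀ (i : I) (π : ∀ j, S → A j → ℝ), IsPolicy π →
      ∀ (πi' : S → A i → ℝ), (∀ s, IsProbVec (πi' s)) →
        ∀ (μ : S → ℝ), IsProbVec μ →
          |((∑ s, μ s * V i π s) - (∑ s, μ s * V i (Function.update π i πi') s)) -
              ((∑ s, μ s * Vt i π s) - (∑ s, μ s * Vt i (Function.update π i πi') s))| ≤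
            2 * τ * Real.log (Fintype.card (A i)) / (1 - δ) := by
  intro i π hπ πi' hπi' μ hμ
  have hπ' : IsPolicy (Function.update π i πi') := hπ.update hπi'
  have sharp := smoothed_value_difference_close_general hδ.le hδ1 hP hτ.le hπ hπ'
    (hV i _ hπ) (hV i _ hπ') (hVt i _ hπ) (hVt i _ hπ') hμ
  rw [mul_assoc, mul_div_assoc]
  linarith [(abs_nonneg _).trans sharp]
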